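/- Let (F, θ) be an LCS structure on a unimodular almost-complex Lie algebra (𝔤, J) inducing an LCAK metric g, and suppose that T = θ^♯ is g-orthogonal to the image of the Nijenhuis tensor. Then g is a pluricanonical LCAK metric if and only if g([T, JT], JT) = 0. -/

import Mathlib

noncomputable section

namespace LieLCAK

variable {L : Type*} [LieRing L] [LieAlgebra ℝ L]

/-- the Nijenhuis tensor of an almost complex structure `J` on a Lie algebra. -/
def nijenhuis (J : L → L) (X Y : L) : L :=
  (4 : ℝ)⁻¹ • (⁅J X, J Y⁆ - ⁅X, Y⁆ - J ⁅J X, Y⁆ - J ⁅X, J Y⁆)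

/-- the Lie algebra is unimodular: `tr (ad x) = 0` for every `x`. -/
def Unimodular (L : Type*) [LieRing L] [LieAlgebra ℝ L] : Prop :=
  ∀ X : L, LinearMap.trace ℝ L (LieAlgebra.ad ℝ L X) = 0

end LieLCAK

open LieLCAK

theorem exists_onb {L : Type*} [AddCommGroup L] [Module ℝ L] [FiniteDimensional ℝ L]
    (G : L →ₗ[ℝ] L →ₗ[ℝ] ℝ) (hs : ∀ X Y, G X Y = G Y X) (hp : ∀ X, X ≠ 0 → 0 < G X X) :
    ∃ (m : ℕ) (e : Module.Basis (Fin m) ℝ L), ∀ X, ∀ i, e.repr X i = G (e i) X := by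
  let core : InnerProductSpace.Core ℝ L :=
    { inner := fun X Y => G X Y
      conj_inner_symm := fun X Y => by simpa using hs Y X
      re_inner_nonneg := fun X => by
        by_cases h : X = 0
        · simp [h]
        · simpa using (hp X h).le
      add_left := fun X Y Z => by simp
      smul_left := fun X Y r => by simp
      definite := fun X h => by
        by_contra h'
        exact (hp X h').ne' h }
  let _ : NormedAddCommGroup L := core.toNormedAddCommGroup
  let _ : InnerProductSpace ℝ L := InnerProductSpace.ofCore core.toCore
  refine ⟨Module.finrank ℝ L, (stdOrthonormalBasis ℝ L).toBasis, fun X i => ?_⟩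
  have h1 := (stdOrthonormalBasis ℝ L).repr_apply_apply X i
  rw [OrthonormalBasis.coe_toBasis_repr_apply, h1, OrthonormalBasis.coe_toBasis]
  rfl

section core
variable {L : Type*} [LieRing L] [LieAlgebra ℝ L] [FiniteDimensional ℝ L]

theorem core_vanish (huni : Unimodular L)
    (J : L →ₗ[ℝ] L) (hJsq : ∀ X, J (J X) = - X)
    (F : L →ₗ[ℝ] L →ₗ[ℝ] ℝ) (hFalt : ∀ X Y, F X Y = - F Y X)
    (θ : L →ₗ[ℝ] ℝ) (hθclosed : ∀ X Y : L, θ ⁅X, Y⁆ = 0)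
    (hlcs : ∀ X Y Z : L,
      -F ⁅X, Y⁆ Z + F ⁅X, Z⁆ Y - F ⁅Y, Z⁆ X
        = θ X * F Y Z - θ Y * F X Z + θ Z * F X Y)
    (hJJ : ∀ X Y, F (J X) (J Y) = F X Y)
    (hgpos : ∀ X : L, X ≠ 0 → 0 < F X (J X))
    (T : L) (hT : ∀ X, F T (J X) = θ X)
    (b : L →ₗ[ℝ] L →ₗ[ℝ] ℝ)
    (hb : ∀ Y Z, b Y Z = F ⁅T, Y⁆ Z + F Y ⁅T, Z⁆)
    (hbJ : ∀ Y Z, b (J Y) (J Z) = b Y Z)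
    (h0 : F ⁅T, J T⁆ (J (J T)) = 0) : ∀ X Y, b X Y = 0 := by
  have hFJ : ∀ X Y, F (J X) Y = - F X (J Y) := fun X Y => by
    rw [← hJJ X (J Y), hJsq]; simp
  have hGs : ∀ X Y, F X (J Y) = F Y (J X) := fun X Y => by
    rw [hFalt, hFJ]; simp
  obtain ⟨m, e, he⟩ := exists_onb (F.compl₂ J) (fun X Y => by simpa using hGs X Y)
    (fun X h => by simpa using hgpos X h)
  have he : ∀ X i, e.repr X i = F (e i) (J X) := fun X i => by simpa using he X i
  -- expansion
  have hexp : ∀ (u : L →ₗ[ℝ] ℝ) X, ∑ i, F (e i) (J X) * u (e i) = u X := fun u X => by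
    conv_rhs => rw [← e.sum_repr X]
    simp [he]
  have htr : ∀ f : L →ₗ[ℝ] L, LinearMap.trace ℝ L f = ∑ i, F (f (e i)) (J (e i)) := fun f => by
    rw [LinearMap.trace_eq_matrix_trace ℝ e, Matrix.trace]
    refine Finset.sum_congr rfl fun i _ => ?_
    rw [Matrix.diag_apply, LinearMap.toMatrix_apply, he, hGs]
  have htrX : ∀ X, ∑ i, F ⁅X, e i⁆ (J (e i)) = 0 := fun X => by
    have := htr (LieAlgebra.ad ℝ L X)
    rw [huni X] at this
    simpa using this.symm
  -- moving J across
  have hswap : ∀ u : L →ₗ[ℝ] L →ₗ[ℝ] ℝ, ∑ i, u (J (e i)) (e i) = - ∑ i, u (e i) (J (e i)) := by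
    intro u
    have h1 : ∀ i, u (J (e i)) (e i) = ∑ j, F (e j) (J (J (e i))) * u (e j) (e i) := fun i =>
      (hexp (u.flip (e i)) (J (e i))).symm
    have h2 : ∀ i, u (e i) (J (e i)) = ∑ j, F (e j) (J (J (e i))) * u (e i) (e j) := fun i =>
      (hexp (u (e i)) (J (e i))).symm
    simp only [h1, h2]
    rw [Finset.sum_comm, ← Finset.sum_neg_distrib]
    refine Finset.sum_congr rfl fun i _ => ?_
    rw [← Finset.sum_neg_distrib]
    refine Finset.sum_congr rfl fun j _ => ?_
    simp only [hJsq, map_neg]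
    rw [hFalt (e i) (e j)]; ring
  have hbalt : ∀ X Y, b X Y = - b Y X := fun X Y => by
    rw [hb, hb, hFalt X, hFalt Y]; ring
  have hdb : ∀ X Y Z, -b ⁅X, Y⁆ Z + b ⁅X, Z⁆ Y - b ⁅Y, Z⁆ X
        = θ X * b Y Z - θ Y * b X Z + θ Z * b X Y := by
    intro X Y Z
    have h1 := hlcs ⁅T, X⁆ Y Z
    have h2 := hlcs X ⁅T, Y⁆ Z
    have h3 := hlcs X Y ⁅T, Z⁆
    simp only [hθclosed] at h1 h2 h3
    simp only [hb, leibniz_lie T, map_add, LinearMap.add_apply]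
    linarith
  -- V
  set V := ∑ i, ⁅e i, J (e i)⁆ with hV
  have hVF : ∀ X, F V X = - ((m : ℝ) - 2) * θ X := by
    intro X
    have h := Finset.sum_congr rfl fun i (_ : i ∈ Finset.univ) => hlcs X (e i) (J (e i))
    simp only [Finset.sum_add_distrib, Finset.sum_sub_distrib, Finset.sum_neg_distrib] at h
    have s1 := hswap (F ∘ₗ (LieAlgebra.ad ℝ L X))
    simp only [LinearMap.comp_apply] at s1
    have s1' : ∑ i, F ⁅X, J (e i)⁆ (e i) = - ∑ i, F ⁅X, e i⁆ (J (e i)) := by simpa using s1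
    have s2 : ∑ i, F (e i) (J (e i)) = (m : ℝ) := by
      simp [← he]
    have s3 : ∑ i, θ (J (e i)) * F X (e i) = - ∑ i, θ (e i) * F X (J (e i)) := by
      have := hswap ((LinearMap.mul ℝ ℝ).compl₁₂ θ (F X))
      simpa using this
    have s4 : ∑ i, θ (e i) * F X (J (e i)) = θ X := by
      rw [← hexp θ X]
      refine Finset.sum_congr rfl fun i _ => ?_
      rw [hGs X]; ring
    have s5 : ∑ i, F ⁅e i, J (e i)⁆ X = F V X := by
      rw [hV]; simp
    rw [s1', htrX, s5, ← Finset.mul_sum, s2, s3, s4] at h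
    linarith
  have hVe : V = ((m : ℝ) - 2) • J T := by
    by_contra hne
    have := hgpos _ (sub_ne_zero.mpr hne)
    have h2 : ∀ X, F (V - ((m : ℝ) - 2) • J T) X = 0 := fun X => by
      rw [map_sub, LinearMap.sub_apply, hVF, map_smul, LinearMap.smul_apply, hFJ, hT, smul_eq_mul]
      ring
    rw [h2] at this
    exact lt_irrefl _ this
  have hTT : b T (J T) = 0 := by
    rw [hb, lie_self, hFalt T]
    rw [hJsq, map_neg] at h0
    simp at h0 ⊢
    exact h0
  -- main trace identity
  have s1 : ∑ i, b ⁅T, J (e i)⁆ (e i) = - ∑ i, b ⁅T, e i⁆ (J (e i)) := by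
    simpa using hswap (b ∘ₗ (LieAlgebra.ad ℝ L T))
  have hmain : ∑ i, b ⁅T, e i⁆ (J (e i)) = 0 := by
    have h := Finset.sum_congr rfl fun i (_ : i ∈ Finset.univ) => hdb T (e i) (J (e i))
    simp only [Finset.sum_add_distrib, Finset.sum_sub_distrib, Finset.sum_neg_distrib] at h
    have s2 : ∑ i, b (e i) (J (e i)) = 0 := by
      have q : ∑ i, F ⁅T, J (e i)⁆ (e i) = - ∑ i, F ⁅T, e i⁆ (J (e i)) := by
        simpa using hswap (F ∘ₗ (LieAlgebra.ad ℝ L T))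
      simp only [hb, Finset.sum_add_distrib]
      simp only [fun i => hFalt (e i) ⁅T, J (e i)⁆, Finset.sum_neg_distrib]
      rw [q, htrX]; simp
    have s3 : ∑ i, θ (J (e i)) * b T (e i) = - ∑ i, θ (e i) * b T (J (e i)) := by
      have := hswap ((LinearMap.mul ℝ ℝ).compl₁₂ θ (b T))
      simpa using this
    have s4 : ∑ i, θ (e i) * b T (J (e i)) = b T (J T) := by
      have := hexp (b T ∘ₗ J) T
      simp only [LinearMap.comp_apply] at this
      rw [← this]
      refine Finset.sum_congr rfl fun i _ => ?_
      rw [← hT, hGs T]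
    have s5 : ∑ i, b ⁅e i, J (e i)⁆ T = 0 := by
      have : ∑ i, b ⁅e i, J (e i)⁆ T = b V T := by
        rw [hV]; simp
      rw [this, hVe, map_smul, LinearMap.smul_apply, hbalt, hTT]; simp
    rw [s1, s5, ← Finset.mul_sum, s2, s3, s4, hTT] at h
    linarith
  -- norm of h
  have hsq : ∑ j, ∑ i, b (e i) (J (e j)) * b (e i) (J (e j)) = 0 := by
    have hsym : ∀ X Y, b X (J Y) = b Y (J X) := fun X Y => by
      rw [← hbJ X, hJsq, hbalt]; simp
    have e1 : ∀ j i, b (e i) (J (e j)) * b (e i) (J (e j)) =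
        F (e j) (J ⁅T, e i⁆) * (b.flip (J (e i))) (e j)
          + F (e i) (J (-(J ⁅T, J (e j)⁆))) * (b.flip (J (e j))) (e i) := by
      intro j i
      rw [LinearMap.flip_apply, LinearMap.flip_apply, hsym (e j) (e i), ← add_mul, map_neg, hJsq,
        neg_neg, hGs (e j), ← hb]
    simp only [e1, Finset.sum_add_distrib]
    rw [Finset.sum_comm]
    simp only [hexp]
    simp only [LinearMap.flip_apply, map_neg, LinearMap.neg_apply, hbJ, Finset.sum_neg_distrib]
    rw [s1, hmain]; simp
  have hz : ∀ i j, b (e i) (J (e j)) = 0 := by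
    intro i j
    have h1 := (Finset.sum_eq_zero_iff_of_nonneg
      (fun j _ => Finset.sum_nonneg fun i _ => mul_self_nonneg _)).1 hsq j (Finset.mem_univ _)
    have h2 := (Finset.sum_eq_zero_iff_of_nonneg
      (fun i _ => mul_self_nonneg _)).1 h1 i (Finset.mem_univ _)
    exact mul_self_eq_zero.1 h2
  have hc : b.compl₂ J = 0 := by
    refine e.ext fun i => e.ext fun j => ?_
    simpa using hz i j
  intro X Y
  have := LinearMap.congr_fun (LinearMap.congr_fun hc X) (-(J Y))
  simpa [hJsq] using this

end core

/-- Let `(F, θ)` be an LCS structure on a unimodular almost complex Lie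
algebra `(𝔤, J)` inducing an LCAK metric `g` (so `g = F(·, J·)` is a positive definite
inner product), with Levi-Civita connection `D` given by the Koszul formula, and
`T = θ^♯`.  Suppose that `T` is `g`-orthogonal to the image of the Nijenhuis tensor.
Then `g` is a pluricanonical LCAK metric (the image of the Nijenhuis tensor is
`g`-orthogonal to `Span(T, JT)` and `Dθ` is `J`-anti-invariant, where
`(D_X θ)(Y) = -θ(D_X Y)`) if and only if `g([T, JT], JT) = 0`. -/
theorem stmt3 (L : Type*) [LieRing L] [LieAlgebra ℝ L] [FiniteDimensional ℝ L]
    (huni : Unimodular L)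
    (J : L → L) (hJlin : IsLinearMap ℝ J) (hJsq : ∀ X, J (J X) = - X)
    (F : L → L → ℝ)
    (hFbilin : ∀ X : L, IsLinearMap ℝ (F X) ∧ IsLinearMap ℝ fun Y => F Y X)
    (hFalt : ∀ X Y, F X Y = - F Y X)
    (hFnondeg : ∀ X, (∀ Y, F X Y = 0) → X = 0)
    (θ : L → ℝ) (hθlin : IsLinearMap ℝ θ)
    (hθclosed : ∀ X Y : L, θ ⁅X, Y⁆ = 0)
    (hlcs : ∀ X Y Z : L,
      -F ⁅X, Y⁆ Z + F ⁅X, Z⁆ Y - F ⁅Y, Z⁆ X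
        = θ X * F Y Z - θ Y * F X Z + θ Z * F X Y)
    (g : L → L → ℝ) (hgdef : ∀ X Y, g X Y = F X (J Y))
    (hgsymm : ∀ X Y, g X Y = g Y X)
    (hgpos : ∀ X : L, X ≠ 0 → 0 < g X X)
    (D : L → L → L)
    (hKoszul : ∀ X Y Z : L,
      2 * g (D X Y) Z = g ⁅X, Y⁆ Z - g ⁅Y, Z⁆ X + g ⁅Z, X⁆ Y)
    (T : L) (hT : ∀ X, g T X = θ X)
    (hNorthT : ∀ X Y, g (nijenhuis J X Y) T = 0) :
    ((∀ X Y, g (nijenhuis J X Y) T = 0 ∧ g (nijenhuis J X Y) (J T) = 0) ∧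
        (∀ X Y, -θ (D X Y) + -θ (D (J X) (J Y)) = 0))
      ↔ g ⁅T, J T⁆ (J T) = 0 := by
  obtain ⟨J, rfl⟩ : ∃ J' : L →ₗ[ℝ] L, J = J' := ⟨hJlin.mk' J, rfl⟩
  obtain ⟨θ, rfl⟩ : ∃ θ' : L →ₗ[ℝ] ℝ, θ = θ' := ⟨hθlin.mk' θ, rfl⟩
  obtain ⟨F, rfl⟩ : ∃ F' : L →ₗ[ℝ] L →ₗ[ℝ] ℝ, F = fun X Y => F' X Y :=
    ⟨LinearMap.mk₂ ℝ F (fun X Y Z => (hFbilin Z).2.map_add X Y)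
      (fun c X Z => (hFbilin Z).2.map_smul c X) (fun X Y Z => (hFbilin X).1.map_add Y Z)
      (fun c X Z => (hFbilin X).1.map_smul c Z), rfl⟩
  obtain rfl : g = fun X Y => F X (J Y) := by
    funext X Y; exact hgdef X Y
  simp only [] at *
  have hJJ : ∀ X Y, F (J X) (J Y) = F X Y := fun X Y => by
    rw [hgsymm, hJsq, map_neg, hFalt X Y]
  have hFJ : ∀ X Y, F (J X) Y = - F X (J Y) := fun X Y => by
    rw [← hJJ X (J Y), hJsq]; simp
  -- `η` of brackets is J-invariant
  have hη : ∀ X Y, F ⁅J X, Y⁆ T + F ⁅X, J Y⁆ T = 0 := by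
    intro X Y
    have h := hNorthT X Y
    rw [nijenhuis, hgsymm, hT, map_smul, map_sub, map_sub, map_sub, hθclosed, hθclosed,
      ← hT, ← hT, hJsq, hJsq, map_neg, map_neg, hFalt T, hFalt T ⁅X, J Y⁆, smul_eq_mul] at h
    linarith
  have hη2 : ∀ X Y, F ⁅J X, J Y⁆ T = F ⁅X, Y⁆ T := by
    intro X Y
    have h := hη X (J Y)
    rw [hJsq, lie_neg, map_neg, LinearMap.neg_apply] at h
    linarith
  let b : L →ₗ[ℝ] L →ₗ[ℝ] ℝ :=
    F ∘ₗ (LieAlgebra.ad ℝ L T) + F.compl₂ (LieAlgebra.ad ℝ L T)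
  have hb : ∀ Y Z, b Y Z = F ⁅T, Y⁆ Z + F Y ⁅T, Z⁆ := fun Y Z => by simp [b]
  have hTJ : ∀ Z, F T Z = - θ (J Z) := fun Z => by
    rw [← hT, hJsq]; simp
  have hb2 : ∀ Y Z, b Y Z = - F ⁅Y, Z⁆ T - θ T * F Y Z + θ Y * F T Z - θ Z * F T Y := by
    intro Y Z
    have h := hlcs T Y Z
    rw [hb, hFalt Y]
    linarith
  have hbJ : ∀ Y Z, b (J Y) (J Z) = b Y Z := by
    intro Y Z
    rw [hb2, hb2, hη2, hJJ, hT, hT, hTJ, hTJ]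
    ring
  have hDθ : ∀ X Y, -θ (D X Y) + -θ (D (J X) (J Y)) = - b X (J Y) := by
    intro X Y
    have k1 := hKoszul X Y T
    have k2 := hKoszul (J X) (J Y) T
    have k3 : b X (J Y) = b Y (J X) := by
      rw [← hbJ X, hJsq, hb, hb, hFalt _ (-Y), hFalt (J X), lie_neg]
      simp only [map_neg, LinearMap.neg_apply]
      ring
    rw [hgsymm, hT, hgsymm, hT, hθclosed, ← lie_skew Y T] at k1
    rw [hgsymm, hT, hgsymm, hT, hθclosed, ← lie_skew (J Y) T, hJsq, hJsq] at k2
    rw [hb, hb] at k3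
    rw [hb]
    have k4 := hFalt X ⁅T, J Y⁆
    have k5 := hFalt Y ⁅T, J X⁆
    simp only [map_neg, LinearMap.neg_apply] at k1 k2
    linarith
  constructor
  · rintro ⟨-, h⟩
    have h1 := h T T
    rw [hDθ, hb, lie_self, hFalt T] at h1
    rw [hJsq, map_neg]
    simp at h1 ⊢
    exact h1
  · intro h0
    have hz := core_vanish huni J hJsq F hFalt θ hθclosed hlcs hJJ hgpos T hT b hb hbJ h0
    refine ⟨fun X Y => ⟨hNorthT X Y, ?_⟩, fun X Y => by rw [hDθ, hz, neg_zero]⟩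
    rw [nijenhuis, hJsq, map_neg]
    simp only [map_sub, map_smul, LinearMap.sub_apply, LinearMap.smul_apply, hη2]
    have t1 : ∀ U, F (J U) T = - θ U := fun U => by rw [hFJ, hgsymm, hT]
    rw [t1, t1, hθclosed, hθclosed]; simp
end
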